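/- Let Γ be a symmetric coordination game on a finite simple graph G with c ≥ 1 colors and the equal-split distribution rule. Then for every pure Nash equilibrium s and every strategy profile s*, u(s*) ≤ (1 + 2·ρ(G))·u(s). -/

import Mathlib

open Finset
open scoped Classical

variable {V : Type*}

noncomputable def edgesIn [Fintype V] (G : SimpleGraph V) (S : Finset V) : ℕ :=
  (G.edgeFinset.filter fun e => ∀ v ∈ e, v ∈ S).card

noncomputable def maxDensity [Fintype V] (G : SimpleGraph V) : ℝ :=
  ⨆ S : {S : Finset V // S.Nonempty}, (edgesIn G S.1 : ℝ) / (S.1.card : ℝ)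

noncomputable def maxDisparity (G : SimpleGraph V) (α : V → V → ℝ) : ℝ :=
  ⨆ p : {p : V × V // G.Adj p.1 p.2}, α p.1.1 p.1.2 / α p.1.2 p.1.1

noncomputable def util [Fintype V] (G : SimpleGraph V) (coord : V → V → Prop)
    (α w : V → V → ℝ) {c : ℕ} (q : V → Fin c → ℝ) (s : V → Fin c) (i : V) : ℝ :=
  q i (s i) +
    ∑ j ∈ G.neighborFinset i,
      if (coord i j ∧ s i = s j) ∨ (¬ coord i j ∧ s i ≠ s j)
      then α i j / (α i j + α j i) * w i j else 0

noncomputable def welfare [Fintype V] (G : SimpleGraph V) (coord : V → V → Prop)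
    (α w : V → V → ℝ) {c : ℕ} (q : V → Fin c → ℝ) (s : V → Fin c) : ℝ :=
  ∑ i, util G coord α w q s i

def IsNash [Fintype V] (G : SimpleGraph V) (coord : V → V → Prop)
    (α w : V → V → ℝ) {c : ℕ} (q : V → Fin c → ℝ) (s : V → Fin c) : Prop :=
  ∀ (i : V) (k : Fin c),
    util G coord α w q (Function.update s i k) i ≤ util G coord α w q s i

noncomputable def utilA [Fintype V] (G : SimpleGraph V) (w : V → V → ℝ)
    {c : ℕ} (s : V → Fin c) (i : V) : ℝ :=
  ∑ j ∈ G.neighborFinset i, if s i = s j then w i j / 2 else 0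

noncomputable def welfareA [Fintype V] (G : SimpleGraph V) (w : V → V → ℝ)
    {c : ℕ} (s : V → Fin c) : ℝ :=
  ∑ i, utilA G w s i

def IsNashA [Fintype V] (G : SimpleGraph V) (w : V → V → ℝ)
    {c : ℕ} (St : V → Finset (Fin c)) (s : V → Fin c) : Prop :=
  ∀ i, ∀ k ∈ St i, utilA G w (Function.update s i k) i ≤ utilA G w s i

def IsEpsKEq [Fintype V] (G : SimpleGraph V) (w : V → V → ℝ)
    {c : ℕ} (St : V → Finset (Fin c)) (ε : ℝ) (k : ℕ) (s : V → Fin c) : Prop :=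
  ∀ K : Finset V, K.Nonempty → K.card ≤ k →
    ∀ s' : V → Fin c, (∀ i ∈ K, s' i ∈ St i) → (∀ i ∉ K, s' i = s i) →
      ∃ j ∈ K, utilA G w s' j ≤ ε * utilA G w s j

def IsGWS (G : SimpleGraph V) (α : V → V → ℝ) : Prop :=
  ∃ (σ : V → ℕ) (γ : V → ℝ), Function.Injective σ ∧ (∀ i, 0 ≤ γ i) ∧
    ∀ i j, G.Adj i j →
      (α i j = 0 → σ i < σ j) ∧
      (0 < α i j → α i j / (α i j + α j i) = γ i / (γ i + γ j))

def BRStep [Fintype V] (G : SimpleGraph V) (coord : V → V → Prop)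
    (α w : V → V → ℝ) {c : ℕ} (q : V → Fin c → ℝ) (s s' : V → Fin c) : Prop :=
  ∃ i, (∀ j, j ≠ i → s' j = s j) ∧
    util G coord α w q s i < util G coord α w q s' i ∧
    ∀ k : Fin c, util G coord α w q (Function.update s i k) i ≤ util G coord α w q s' i

/-!
At a Nash equilibrium `s` a player can deviate to any color, and can single-handedly satisfy any
incident edge that some profile satisfies. Hence the utility `x i` of `i` dominates every preference
`q i k` and the share of `i` in every such edge; when the shares of the two endpoints differ by a
factor at most `d`, the whole edge is worth at most `(1 + d) * min (x i) (x j)`. It remains to bound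
the sum of `min (x i) (x j)` over the edges by `maxDensity G * ∑ i, x i`. As `min (x i) (x j)` is
the integral over `t > 0` of the indicator that both `i` and `j` lie in the superlevel set
`{x ≥ t}`, this is the density bound for that set, integrated over `t`.
-/

section Density

open MeasureTheory

lemma integral_indicator_Ioc_zero {a : ℝ} (ha : 0 ≤ a) :
    ∫ t, (Set.Ioc 0 a).indicator 1 t = a := by
  rw [integral_indicator_one measurableSet_Ioc, Real.volume_real_Ioc_of_le ha, sub_zero]

lemma integrable_indicator_Ioc (a b : ℝ) :
    Integrable ((Set.Ioc a b).indicator (1 : ℝ → ℝ)) :=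
  (integrable_indicator_iff measurableSet_Ioc).2 (integrableOn_const (by simp))

variable [Fintype V] (G : SimpleGraph V)

lemma two_mul_edgesIn (S : Finset V) :
    2 * edgesIn G S = ∑ i, #{j ∈ G.neighborFinset i | i ∈ S ∧ j ∈ S} := by
  set H : SimpleGraph V := (G.induce S).spanningCoe with hH
  have adj_iff (a b : V) : H.Adj a b ↔ G.Adj a b ∧ a ∈ S ∧ b ∈ S := by
    simp [hH]
  have edgeFinset_eq : H.edgeFinset = {e ∈ G.edgeFinset | ∀ v ∈ e, v ∈ S} := by
    ext e
    induction e using Sym2.ind with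
    | _ a b => simp [adj_iff]
  have degree_eq (i : V) : H.degree i = #{j ∈ G.neighborFinset i | i ∈ S ∧ j ∈ S} := by
    rw [← SimpleGraph.card_neighborFinset_eq_degree]
    congr 1
    ext j
    simp [adj_iff]
  simp only [edgesIn, ← edgeFinset_eq, ← degree_eq, H.sum_degrees_eq_twice_card_edges]

lemma edgesIn_le_maxDensity_mul_card (S : Finset V) :
    (edgesIn G S : ℝ) ≤ maxDensity G * #S := by
  obtain rfl | hS := S.eq_empty_or_nonempty
  · simp [edgesIn, Sym2.forall]
  · have div_le : (edgesIn G S : ℝ) / #S ≤ maxDensity G :=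
      le_ciSup (f := fun S : {S : Finset V // S.Nonempty} => (edgesIn G S.1 : ℝ) / #S.1)
        (Set.finite_range _).bddAbove ⟨S, hS⟩
    exact (div_le_iff₀ (by exact_mod_cast hS.card_pos)).1 div_le

lemma sum_indicator_Ioc_min_le (x : V → ℝ) (t : ℝ) :
    ∑ i, ∑ j ∈ G.neighborFinset i, (Set.Ioc 0 (min (x i) (x j))).indicator (1 : ℝ → ℝ) t ≤
      2 * maxDensity G * ∑ i, (Set.Ioc 0 (x i)).indicator (1 : ℝ → ℝ) t := by
  set S : Finset V := {i | t ∈ Set.Ioc 0 (x i)} with hS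
  have sum_vertices : ∑ i, (Set.Ioc 0 (x i)).indicator (1 : ℝ → ℝ) t = #S := by
    simp only [Set.indicator_apply, Pi.one_apply, sum_boole, hS]
  have sum_edges : ∑ i, ∑ j ∈ G.neighborFinset i,
      (Set.Ioc 0 (min (x i) (x j))).indicator (1 : ℝ → ℝ) t = 2 * edgesIn G S := by
    have mem_iff (i j : V) : t ∈ Set.Ioc 0 (min (x i) (x j)) ↔ i ∈ S ∧ j ∈ S := by
      simp only [hS, mem_filter_univ, Set.mem_Ioc, le_min_iff]
      tauto
    simp only [Set.indicator_apply, Pi.one_apply, mem_iff, sum_boole]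
    exact_mod_cast (two_mul_edgesIn G S).symm
  rw [sum_vertices, sum_edges, mul_assoc]
  gcongr
  exact edgesIn_le_maxDensity_mul_card G S

lemma sum_min_le_two_mul_maxDensity_mul_sum {x : V → ℝ} (hx : ∀ i, 0 ≤ x i) :
    ∑ i, ∑ j ∈ G.neighborFinset i, min (x i) (x j) ≤ 2 * maxDensity G * ∑ i, x i := by
  have integrable_edge (i j : V) := integrable_indicator_Ioc 0 (min (x i) (x j))
  have integrable_vertex (i : V) := integrable_indicator_Ioc 0 (x i)
  calc ∑ i, ∑ j ∈ G.neighborFinset i, min (x i) (x j)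
      = ∫ t, ∑ i, ∑ j ∈ G.neighborFinset i, (Set.Ioc 0 (min (x i) (x j))).indicator 1 t := by
        rw [integral_finsetSum _ fun i _ => integrable_finsetSum _ fun j _ => integrable_edge i j]
        refine sum_congr rfl fun i _ => ?_
        rw [integral_finsetSum _ fun j _ => integrable_edge i j]
        exact sum_congr rfl fun j _ => (integral_indicator_Ioc_zero (le_min (hx i) (hx j))).symm
    _ ≤ ∫ t, 2 * maxDensity G * ∑ i, (Set.Ioc 0 (x i)).indicator 1 t :=
        integral_mono
          (integrable_finsetSum _ fun i _ => integrable_finsetSum _ fun j _ => integrable_edge i j)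
          ((integrable_finsetSum _ fun i _ => integrable_vertex i).const_mul _)
          (sum_indicator_Ioc_min_le G x)
    _ = 2 * maxDensity G * ∑ i, x i := by
        rw [integral_const_mul, integral_finsetSum _ fun i _ => integrable_vertex i]
        simp only [integral_indicator_Ioc_zero (hx _)]

lemma sum_neighborFinset_comm {M : Type*} [AddCommMonoid M] (f : V → V → M) :
    ∑ i, ∑ j ∈ G.neighborFinset i, f i j = ∑ i, ∑ j ∈ G.neighborFinset i, f j i :=
  sum_comm' (by simp [G.adj_comm])

end Density

/-- The part of the weight of the edge `{i, j}` that `i` receives when the edge is satisfied. -/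
noncomputable def edgeShare (α w : V → V → ℝ) (i j : V) : ℝ :=
  α i j / (α i j + α j i) * w i j

/-- The edge `{i, j}` is satisfied by the profile `s`: its endpoints agree if it is a coordination
edge, and differ otherwise. -/
def EdgeSatisfied {κ : Type*} (coord : V → V → Prop) (s : V → κ) (i j : V) : Prop :=
  (coord i j ∧ s i = s j) ∨ (¬ coord i j ∧ s i ≠ s j)

lemma EdgeSatisfied.symm {κ : Type*} {coord : V → V → Prop} {s : V → κ} {i j : V}
    (hcoord : ∀ i j, coord i j → coord j i) (h : EdgeSatisfied coord s i j) :
    EdgeSatisfied coord s j i :=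
  h.imp (And.imp (hcoord i j) Eq.symm) (And.imp (mt (hcoord j i)) Ne.symm)

lemma EdgeSatisfied.exists_update {κ : Type*} {coord : V → V → Prop} {t : V → κ} {i j : V}
    (h : EdgeSatisfied coord t i j) (hij : i ≠ j) (s : V → κ) :
    ∃ k, EdgeSatisfied coord (Function.update s i k) i j := by
  simp only [EdgeSatisfied, Function.update_self, Function.update_of_ne hij.symm]
  obtain ⟨hc, -⟩ | ⟨hc, hne⟩ := h
  · exact ⟨s j, .inl ⟨hc, rfl⟩⟩
  · have : Nontrivial κ := ⟨t i, t j, hne⟩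
    obtain ⟨k, hk⟩ := exists_ne (s j)
    exact ⟨k, .inr ⟨hc, hk⟩⟩

lemma add_le_one_add_mul_min {R : Type*} [CommRing R] [LinearOrder R] [IsStrictOrderedRing R]
    {a b d x y : R} (hd : 0 ≤ d) (hab : a ≤ d * b) (hba : b ≤ d * a) (hax : a ≤ x)
    (hby : b ≤ y) : a + b ≤ (1 + d) * min x y := by
  rw [mul_min_of_nonneg _ _ (by positivity), le_min_iff]
  constructor
  · linarith [mul_le_mul_of_nonneg_left hax hd]
  · linarith [mul_le_mul_of_nonneg_left hby hd]

section Share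

variable {α w : V → V → ℝ} {i j : V}

lemma edgeShare_nonneg (hij : 0 ≤ α i j) (hji : 0 ≤ α j i) (hw : 0 ≤ w i j) :
    0 ≤ edgeShare α w i j :=
  mul_nonneg (div_nonneg hij (add_nonneg hij hji)) hw

lemma edgeShare_le_mul_edgeShare {d : ℝ} (hij : 0 ≤ α i j) (hji : 0 ≤ α j i) (hw : 0 ≤ w i j)
    (hwsymm : w i j = w j i) (hd : α i j ≤ d * α j i) :
    edgeShare α w i j ≤ d * edgeShare α w j i := by
  calc α i j / (α i j + α j i) * w i j
      ≤ d * α j i / (α i j + α j i) * w i j := by gcongr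
    _ = d * (α j i / (α j i + α i j) * w j i) := by rw [← hwsymm, add_comm (α j i)]; ring

end Share

section Game

variable [Fintype V] {G : SimpleGraph V} {coord : V → V → Prop} {α w : V → V → ℝ} {c : ℕ}
  {q : V → Fin c → ℝ} {s : V → Fin c}

lemma util_eq_pref_add_sum_edgeShare (s : V → Fin c) (i : V) :
    util G coord α w q s i = q i (s i) +
      ∑ j ∈ G.neighborFinset i, if EdgeSatisfied coord s i j then edgeShare α w i j else 0 :=
  congrArg (q i (s i) + ·) (sum_congr rfl fun _ _ => if_congr Iff.rfl rfl rfl)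

lemma pref_self_le_util (hshare : ∀ i j, G.Adj i j → 0 ≤ edgeShare α w i j) (s : V → Fin c)
    (i : V) : q i (s i) ≤ util G coord α w q s i := by
  rw [util_eq_pref_add_sum_edgeShare]
  refine le_add_of_nonneg_right (sum_nonneg fun j hj => ?_)
  exact ite_nonneg (hshare i j ((G.mem_neighborFinset i j).1 hj)) le_rfl

lemma EdgeSatisfied.edgeShare_le_util (hq : ∀ i k, 0 ≤ q i k)
    (hshare : ∀ i j, G.Adj i j → 0 ≤ edgeShare α w i j) {i j : V}
    (hsat : EdgeSatisfied coord s i j) (hij : G.Adj i j) :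
    edgeShare α w i j ≤ util G coord α w q s i := by
  rw [util_eq_pref_add_sum_edgeShare]
  refine le_add_of_nonneg_of_le (hq i (s i)) ?_
  calc edgeShare α w i j
      = if EdgeSatisfied coord s i j then edgeShare α w i j else 0 := (if_pos hsat).symm
    _ ≤ ∑ l ∈ G.neighborFinset i, if EdgeSatisfied coord s i l then edgeShare α w i l else 0 :=
        single_le_sum
          (fun l hl => ite_nonneg (hshare i l ((G.mem_neighborFinset i l).1 hl)) le_rfl)
          ((G.mem_neighborFinset i j).2 hij)

lemma IsNash.pref_le_util (hs : IsNash G coord α w q s)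
    (hshare : ∀ i j, G.Adj i j → 0 ≤ edgeShare α w i j) (i : V) (k : Fin c) :
    q i k ≤ util G coord α w q s i := by
  simpa only [Function.update_self] using
    (pref_self_le_util hshare (Function.update s i k) i).trans (hs i k)

lemma IsNash.edgeShare_le_util (hs : IsNash G coord α w q s) (hq : ∀ i k, 0 ≤ q i k)
    (hshare : ∀ i j, G.Adj i j → 0 ≤ edgeShare α w i j) {t : V → Fin c} {i j : V}
    (hij : G.Adj i j) (hsat : EdgeSatisfied coord t i j) :
    edgeShare α w i j ≤ util G coord α w q s i := by
  obtain ⟨k, hk⟩ := hsat.exists_update hij.ne s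
  exact (hk.edgeShare_le_util hq hshare hij).trans (hs i k)

lemma welfare_eq_sum_pref_add_sum_edgeShare (hcoord : ∀ i j, coord i j → coord j i)
    (s : V → Fin c) :
    welfare G coord α w q s = ∑ i, q i (s i) +
      (∑ i, ∑ j ∈ G.neighborFinset i, if EdgeSatisfied coord s i j then
        edgeShare α w i j + edgeShare α w j i else 0) / 2 := by
  have satisfied_comm (i j : V) : EdgeSatisfied coord s j i ↔ EdgeSatisfied coord s i j :=
    ⟨.symm hcoord, .symm hcoord⟩
  have swap := sum_neighborFinset_comm G
    fun i j => if EdgeSatisfied coord s i j then edgeShare α w i j else 0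
  simp only [satisfied_comm] at swap
  simp only [welfare, util_eq_pref_add_sum_edgeShare, sum_add_distrib, ite_add_zero, ← swap]
  ring

end Game

theorem stmt4_general [Fintype V] (G : SimpleGraph V) (coord : V → V → Prop) (α : V → V → ℝ)
    (c : ℕ) (w : V → V → ℝ) (q : V → Fin c → ℝ) (d : ℝ)
    (hcoord : ∀ i j, coord i j → coord j i)
    (hα : ∀ i j, G.Adj i j → 0 < α i j)
    (hd : 0 ≤ d) (hαd : ∀ i j, G.Adj i j → α i j ≤ d * α j i)
    (hw : ∀ i j, 0 ≤ w i j) (hwsymm : ∀ i j, w i j = w j i)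
    (hq : ∀ i k, 0 ≤ q i k)
    (s sstar : V → Fin c) (hs : IsNash G coord α w q s) :
    welfare G coord α w q sstar ≤
      (1 + (1 + d) * maxDensity G) * welfare G coord α w q s := by
  have share_nonneg (i j) (hij : G.Adj i j) : 0 ≤ edgeShare α w i j :=
    edgeShare_nonneg (hα i j hij).le (hα j i hij.symm).le (hw i j)
  have share_le (i j) (hij : G.Adj i j) : edgeShare α w i j ≤ d * edgeShare α w j i :=
    edgeShare_le_mul_edgeShare (hα i j hij).le (hα j i hij.symm).le (hw i j) (hwsymm i j)
      (hαd i j hij)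
  set x : V → ℝ := util G coord α w q s
  have pref_le (i k) : q i k ≤ x i := hs.pref_le_util share_nonneg i k
  have x_nonneg (i) : 0 ≤ x i := (hq i (s i)).trans (pref_le i (s i))
  have edge_le (i j) (hij : G.Adj i j) : (if EdgeSatisfied coord sstar i j then
      edgeShare α w i j + edgeShare α w j i else 0) ≤ (1 + d) * min (x i) (x j) := by
    split_ifs with hsat
    · exact add_le_one_add_mul_min hd (share_le i j hij) (share_le j i hij.symm)
        (hs.edgeShare_le_util hq share_nonneg hij hsat)
        (hs.edgeShare_le_util hq share_nonneg hij.symm (hsat.symm hcoord))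
    · exact mul_nonneg (by positivity) (le_min (x_nonneg i) (x_nonneg j))
  calc welfare G coord α w q sstar
      ≤ ∑ i, x i + (∑ i, ∑ j ∈ G.neighborFinset i, (1 + d) * min (x i) (x j)) / 2 := by
        rw [welfare_eq_sum_pref_add_sum_edgeShare hcoord]
        gcongr with i _ i _ j hj
        · exact pref_le i (sstar i)
        · exact edge_le i j ((G.mem_neighborFinset i j).1 hj)
    _ = ∑ i, x i + (1 + d) / 2 * ∑ i, ∑ j ∈ G.neighborFinset i, min (x i) (x j) := by
        simp only [← mul_sum]
        ring
    _ ≤ ∑ i, x i + (1 + d) / 2 * (2 * maxDensity G * ∑ i, x i) := by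
        gcongr
        exact sum_min_le_two_mul_maxDensity_mul_sum G x_nonneg
    _ = (1 + (1 + d) * maxDensity G) * welfare G coord α w q s := by
        rw [welfare]
        ring

theorem stmt4 [Fintype V] (G : SimpleGraph V)
    (c : ℕ) (hc : 1 ≤ c)
    (w : V → V → ℝ) (q : V → Fin c → ℝ)
    (hw : ∀ i j, 0 ≤ w i j) (hwsymm : ∀ i j, w i j = w j i)
    (hq : ∀ i k, 0 ≤ q i k)
    (s sstar : V → Fin c)
    (hs : IsNash G (fun _ _ => True) (fun _ _ => 1) w q s) :
    welfare G (fun _ _ => True) (fun _ _ => 1) w q sstar ≤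
      (1 + 2 * maxDensity G) * welfare G (fun _ _ => True) (fun _ _ => 1) w q s := by
  simpa [one_add_one_eq_two] using stmt4_general G (fun _ _ => True) (fun _ _ => 1) c w q 1
    (by simp) (by simp) (by simp) (by simp) hw hwsymm hq s sstar hs
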